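/- Let S be a finite set and let P and Q be two distinct stochastic S×S matrices which are both irreducible and aperiodic and have the same support, i.e. P(s,t) = 0 if and only if Q(s,t) = 0 for all s,t ∈ S. Then there exist an integer L ≥ 1, elements α, β ∈ S, and two finite paths [b_1, …, b_L] and [b'_1, …, b'_L] in S, both admissible for P (all transitions α→b_1, b_1→b_2, …, b_{L−1}→b_L, b_L→β, and likewise for the primed path, have positive P-probability), such that ( P(α,b_1)P(b_1,b_2)⋯P(b_{L−1},b_L)P(b_L,β) ) / ( P(α,b'_1)P(b'_1,b'_2)⋯P(b'_{L−1},b'_L)P(b'_L,β) ) ≠ ( Q(α,b_1)Q(b_1,b_2)⋯Q(b_{L−1},b_L)Q(b_L,β) ) / ( Q(α,b'_1)Q(b'_1,b'_2)⋯Q(b'_{L−1},b'_L)Q(b'_L,β) ). -/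

import Mathlib

/-!
If no two admissible paths distinguished `P` from `Q`, then the product of the quotients
`g = P / Q` along a path of length `n ≥ 2` would depend only on `n` and the endpoints
(`ratio_unique`). Let `k` be such that `P ^ k` is positive; then any two states are joined by paths
of every length `≥ k`. Fix `α` and let `u m s` be the product of `g` along paths of length `k + 2 + m`
from `α` to `s`. Appending an edge gives `u (m+1) t = u m s * g s t`, so `v m = u (m+1) / u m`
satisfies `v (m+1) t = v m s` along every edge `s → t`. Following paths of length `k` out of `α`
shows that `v k` is the constant `c = v 0 α`, and `h = u k` satisfies `P s t * h s = c * h t * Q s t`.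
Summing over `t`, `h = c * Q h`; evaluating at a maximum and at a
minimum of `h` gives `c = 1`, and the maximum principle for the harmonic function `h` makes it
constant (`eq_of_conjugate`). Therefore `P = Q`.
-/

open Filter Topology

namespace CombinatorialLemma

/-- A stochastic matrix over the finite state space `S`. -/
def IsStochastic {S : Type*} [Fintype S] (P : S → S → ℝ) : Prop :=
  (∀ s t, 0 ≤ P s t) ∧ ∀ s, ∑ t, P s t = 1

/-- Matrix multiplication for `S × S` matrices given as functions. -/
noncomputable def matMul {S : Type*} [Fintype S] (P Q : S → S → ℝ) : S → S → ℝ :=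
  fun s t => ∑ u, P s u * Q u t

/-- Matrix powers. -/
noncomputable def matPow {S : Type*} [Fintype S] [DecidableEq S]
    (P : S → S → ℝ) : ℕ → S → S → ℝ
  | 0 => fun s t => if s = t then 1 else 0
  | k + 1 => matMul (matPow P k) P

/-- `Walk P g n s t r`: there is a path with `n` transitions from `s` to `t`, each of positive
`P`-probability, along which the product of the edge labels `g` is `r`. -/
inductive Walk {S : Type*} (P g : S → S → ℝ) : ℕ → S → S → ℝ → Prop
  | nil (s : S) : Walk P g 0 s s 1
  | snoc {n : ℕ} {s t u : S} {r : ℝ} :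
      Walk P g n s t r → 0 < P t u → Walk P g (n + 1) s u (r * g t u)

lemma Walk.cons {S : Type*} {P g : S → S → ℝ} {n : ℕ} {s t u : S} {r : ℝ}
    (h : 0 < P s t) (w : Walk P g n t u r) : Walk P g (n + 1) s u (g s t * r) := by
  induction w with
  | nil t => simpa using (Walk.nil (g := g) s).snoc h
  | snoc _ he ih => rw [← mul_assoc]; exact (ih h).snoc he

lemma Walk.exists_fun {S : Type*} {P g : S → S → ℝ} {n : ℕ} {s t : S} {r : ℝ}
    (w : Walk P g n s t r) : ∃ p : ℕ → S, p 0 = s ∧ p n = t ∧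
      (∀ i < n, 0 < P (p i) (p (i + 1))) ∧ ∏ i ∈ Finset.range n, g (p i) (p (i + 1)) = r := by
  induction w with
  | nil s => exact ⟨fun _ => s, by simp⟩
  | @snoc n s t u r _ he ih =>
    obtain ⟨p, h0, hn, hp, hr⟩ := ih
    refine ⟨fun i => if i ≤ n then p i else u, by simpa using h0, by simp, ?_, ?_⟩
    · intro i hi
      rcases Nat.lt_succ_iff_lt_or_eq.mp hi with hi | rfl
      · have h1 : i ≤ n := hi.le
        have h2 : i + 1 ≤ n := hi
        simpa [h1, h2] using hp i hi
      · simpa [hn] using he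
    · rw [Finset.prod_range_succ, ← hr]
      congr 1
      · refine Finset.prod_congr rfl fun i hi => ?_
        have hi := Finset.mem_range.mp hi
        have h1 : i ≤ n := hi.le
        have h2 : i + 1 ≤ n := hi
        simp [h1, h2]
      · simp [hn]

lemma exists_walk_of_matPow_pos {S : Type*} [Fintype S] [DecidableEq S] {P : S → S → ℝ}
    (hP : IsStochastic P) (g : S → S → ℝ) (k : ℕ) (s t : S) (h : 0 < matPow P k s t) :
    ∃ r, Walk P g k s t r := by
  induction k generalizing t with
  | zero =>
    by_cases hst : s = t
    · subst hst; exact ⟨1, .nil s⟩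
    · simp [matPow, hst] at h
  | succ k ih =>
    have hnn : ∀ (k : ℕ) (s t : S), 0 ≤ matPow P k s t := by
      intro k
      induction k with
      | zero => intro s t; simp only [matPow]; split_ifs <;> norm_num
      | succ k ih =>
        intro s t
        exact Finset.sum_nonneg fun u _ => mul_nonneg (ih s u) (hP.1 u t)
    obtain ⟨u, -, hu⟩ := Finset.exists_lt_of_sum_lt
      (s := Finset.univ) (f := fun _ : S => (0 : ℝ)) (by simpa [matPow, matMul] using h)
    have h2 : 0 < P u t := pos_of_mul_pos_right hu (hnn k s u)
    have h1 : 0 < matPow P k s u := pos_of_mul_pos_left hu (hP.1 u t)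
    obtain ⟨r, w⟩ := ih u h1
    exact ⟨_, w.snoc h2⟩

lemma IsStochastic.exists_edge {S : Type*} [Fintype S] {P : S → S → ℝ}
    (hP : IsStochastic P) (s : S) : ∃ t, 0 < P s t := by
  obtain ⟨t, -, ht⟩ := Finset.exists_lt_of_sum_lt
    (s := Finset.univ) (f := fun _ : S => (0 : ℝ)) (g := P s) (by simp [hP.2 s])
  exact ⟨t, ht⟩

/-- Primitivity persists: once all pairs are joined by paths of length `k`, they are joined by paths
of every length `k + m`, because every state has an outgoing edge to prepend. -/
lemma exists_walk_add {S : Type*} [Fintype S] {P g : S → S → ℝ} (hP : IsStochastic P) {k : ℕ}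
    (h : ∀ s t, ∃ r, Walk P g k s t r) (m : ℕ) : ∀ s t, ∃ r, Walk P g (k + m) s t r := by
  induction m with
  | zero => exact h
  | succ m ih =>
    intro s t
    obtain ⟨u, hu⟩ := hP.exists_edge s
    obtain ⟨r, w⟩ := ih u t
    exact ⟨_, Walk.cons hu w⟩

/-- A function transported unchanged along edges (with one time step per edge) is transported
unchanged along walks. -/
lemma Walk.transport {S : Type*} {P g : S → S → ℝ} {N : ℕ} {v : ℕ → S → ℝ}
    (hv : ∀ n, N ≤ n → ∀ s t, 0 < P s t → v (n + 1) t = v n s)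
    {m : ℕ} {s t : S} {r : ℝ} (w : Walk P g m s t r) : v (N + m) t = v N s := by
  induction w with
  | nil s => rfl
  | @snoc m s t u r _ he ih => rw [← ih]; exact hv (N + m) (by omega) t u he

/-- Two stochastic matrices related by `P s t * h s = c * h t * Q s t` with `h > 0` and `P`
irreducible are equal. -/
lemma eq_of_conjugate {S : Type*} [Fintype S] [Nonempty S] {P Q g : S → S → ℝ}
    (hP : IsStochastic P) (hQ : IsStochastic Q) (hsupp : ∀ s t : S, P s t = 0 ↔ Q s t = 0)
    {N : ℕ} (hw : ∀ s t, ∃ r, Walk P g N s t r) {h : S → ℝ} (hh : ∀ s, 0 < h s) {c : ℝ}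
    (hc : ∀ s t, P s t * h s = c * h t * Q s t) : P = Q := by
  have hsum : ∀ s, h s = c * ∑ t, Q s t * h t := by
    intro s
    calc h s = ∑ t, P s t * h s := by rw [← Finset.sum_mul, hP.2 s, one_mul]
      _ = ∑ t, c * (Q s t * h t) := Finset.sum_congr rfl fun t _ => by rw [hc s t]; ring
      _ = _ := by rw [Finset.mul_sum]
  obtain ⟨a, ha⟩ := Finite.exists_max h
  obtain ⟨b, hb⟩ := Finite.exists_min h
  have hle : ∀ s, ∑ t, Q s t * h t ≤ h a := by
    intro s
    calc ∑ t, Q s t * h t ≤ ∑ t, Q s t * h a :=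
          Finset.sum_le_sum fun t _ => mul_le_mul_of_nonneg_left (ha t) (hQ.1 s t)
      _ = h a := by rw [← Finset.sum_mul, hQ.2 s, one_mul]
  have hge : ∀ s, h b ≤ ∑ t, Q s t * h t := by
    intro s
    calc h b = ∑ t, Q s t * h b := by rw [← Finset.sum_mul, hQ.2 s, one_mul]
      _ ≤ ∑ t, Q s t * h t :=
          Finset.sum_le_sum fun t _ => mul_le_mul_of_nonneg_left (hb t) (hQ.1 s t)
  have hpos : ∀ s, 0 < ∑ t, Q s t * h t := fun s => (hh b).trans_le (hge s)
  have hc0 : 0 < c := by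
    have := hsum a
    have h1 := hh a
    rw [this] at h1
    exact pos_of_mul_pos_left h1 (hpos a).le
  have hc1 : c = 1 := by
    apply le_antisymm
    · have h1 := mul_le_mul_of_nonneg_left (hge b) hc0.le
      rw [← hsum b] at h1
      nlinarith [hh b]
    · have h1 := mul_le_mul_of_nonneg_left (hle a) hc0.le
      rw [← hsum a] at h1
      nlinarith [hh a]
  subst hc1
  simp only [one_mul] at hsum hc
  -- Maximum principle: a maximum of `h` propagates along edges.
  have hstep : ∀ s t, 0 < P s t → h s = h a → h t = h a := by
    intro s t hst hs
    have hz : ∑ x, Q s x * (h a - h x) = 0 := by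
      simp only [mul_sub, Finset.sum_sub_distrib]
      rw [← Finset.sum_mul, hQ.2 s, one_mul, ← hsum s, hs, sub_self]
    have h1 := (Finset.sum_eq_zero_iff_of_nonneg fun x _ =>
      mul_nonneg (hQ.1 s x) (sub_nonneg.2 (ha x))).1 hz t (Finset.mem_univ t)
    rcases mul_eq_zero.1 h1 with h2 | h2
    · exact absurd ((hsupp s t).2 h2) hst.ne'
    · linarith
  have hall : ∀ {m : ℕ} {s t : S} {r : ℝ}, Walk P g m s t r → h s = h a → h t = h a := by
    intro m s t r w
    induction w with
    | nil s => exact id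
    | snoc _ he ih => exact fun hs => hstep _ _ he (ih hs)
  have hconst : ∀ t, h t = h a := fun t => by
    obtain ⟨r, w⟩ := hw a t
    exact hall w rfl
  funext s t
  have h1 := hc s t
  rw [hconst s, hconst t, mul_comm] at h1
  exact mul_left_cancel₀ (hh a).ne' h1

lemma prod_range_split {S : Type*} (F : S → S → ℝ) (p : ℕ → S) {L : ℕ} (hL : 1 ≤ L) :
    ∏ i ∈ Finset.range (L + 1), F (p i) (p (i + 1)) =
      F (p 0) (p 1) * (∏ i ∈ Finset.Ico 1 L, F (p i) (p (i + 1))) * F (p L) (p (L + 1)) := by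
  rw [Finset.prod_range_succ, Finset.range_eq_Ico, Finset.prod_eq_prod_Ico_succ_bot (by omega)]

/-- If no pair of paths distinguishes `P` from `Q`, then the product of `P / Q` along a walk with
`L ≥ 1` interior vertices depends only on `L` and the endpoints. -/
lemma ratio_unique {S : Type*} {P Q : S → S → ℝ} (hQpos : ∀ s t, 0 < P s t → 0 < Q s t)
    (H : ∀ (L : ℕ), 1 ≤ L → ∀ (α β : S) (b b' : ℕ → S),
      (0 < P α (b 1)) → (∀ i, 1 ≤ i → i < L → 0 < P (b i) (b (i + 1))) → (0 < P (b L) β) →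
      (0 < P α (b' 1)) → (∀ i, 1 ≤ i → i < L → 0 < P (b' i) (b' (i + 1))) → (0 < P (b' L) β) →
      (P α (b 1) * (∏ i ∈ Finset.Ico 1 L, P (b i) (b (i + 1))) * P (b L) β) /
          (P α (b' 1) * (∏ i ∈ Finset.Ico 1 L, P (b' i) (b' (i + 1))) * P (b' L) β) =
        (Q α (b 1) * (∏ i ∈ Finset.Ico 1 L, Q (b i) (b (i + 1))) * Q (b L) β) /
          (Q α (b' 1) * (∏ i ∈ Finset.Ico 1 L, Q (b' i) (b' (i + 1))) * Q (b' L) β))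
    {L : ℕ} (hL : 1 ≤ L) {α β : S} {r r' : ℝ}
    (w : Walk P (fun s t => P s t / Q s t) (L + 1) α β r)
    (w' : Walk P (fun s t => P s t / Q s t) (L + 1) α β r') : r = r' := by
  obtain ⟨p, h0, hn, hp, hr⟩ := w.exists_fun
  obtain ⟨p', h0', hn', hp', hr'⟩ := w'.exists_fun
  have h := H L hL α β p p' (h0 ▸ hp 0 (by omega)) (fun i _ hi => hp i (by omega))
    (hn ▸ hp L (by omega)) (h0' ▸ hp' 0 (by omega)) (fun i _ hi => hp' i (by omega))
    (hn' ▸ hp' L (by omega))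
  have e : ∀ F : S → S → ℝ, F α (p 1) * (∏ i ∈ Finset.Ico 1 L, F (p i) (p (i + 1))) * F (p L) β
      = ∏ i ∈ Finset.range (L + 1), F (p i) (p (i + 1)) := fun F => by
    rw [prod_range_split F p hL, h0, hn]
  have e' : ∀ F : S → S → ℝ,
      F α (p' 1) * (∏ i ∈ Finset.Ico 1 L, F (p' i) (p' (i + 1))) * F (p' L) β
      = ∏ i ∈ Finset.range (L + 1), F (p' i) (p' (i + 1)) := fun F => by
    rw [prod_range_split F p' hL, h0', hn']
  rw [e P, e Q, e' P, e' Q] at h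
  rw [← hr, ← hr', Finset.prod_div_distrib, Finset.prod_div_distrib]
  have q : ∏ i ∈ Finset.range (L + 1), Q (p i) (p (i + 1)) ≠ 0 :=
    Finset.prod_ne_zero_iff.2 fun i hi => (hQpos _ _ (hp i (Finset.mem_range.1 hi))).ne'
  have q' : ∏ i ∈ Finset.range (L + 1), Q (p' i) (p' (i + 1)) ≠ 0 :=
    Finset.prod_ne_zero_iff.2 fun i hi => (hQpos _ _ (hp' i (Finset.mem_range.1 hi))).ne'
  have a' : ∏ i ∈ Finset.range (L + 1), P (p' i) (p' (i + 1)) ≠ 0 :=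
    Finset.prod_ne_zero_iff.2 fun i hi => (hp' i (Finset.mem_range.1 hi)).ne'
  rw [div_eq_div_iff a' q'] at h
  rw [div_eq_div_iff q q']
  linarith

/-- **Combinatorial lemma.**
Let `P ≠ Q` be irreducible and aperiodic stochastic matrices with the same
support. Then there are `L ≥ 1`, states `α, β` and two `P`-admissible paths
`[b_1, …, b_L]`, `[b'_1, …, b'_L]` from `α` to `β` such that the `P`-weight ratio
of the two paths differs from their `Q`-weight ratio. -/
theorem exists_paths_with_different_weight_ratios
    {S : Type*} [Fintype S] [DecidableEq S]
    (P Q : S → S → ℝ) (hP : IsStochastic P) (hQ : IsStochastic Q)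
    (hPprim : ∃ k : ℕ, ∀ s t : S, 0 < matPow P k s t)
    (hQprim : ∃ k : ℕ, ∀ s t : S, 0 < matPow Q k s t)
    (hsupp : ∀ s t : S, P s t = 0 ↔ Q s t = 0)
    (hne : P ≠ Q) :
    ∃ (L : ℕ), 1 ≤ L ∧ ∃ (α β : S) (b b' : ℕ → S),
      (0 < P α (b 1)) ∧ (∀ i, 1 ≤ i → i < L → 0 < P (b i) (b (i + 1))) ∧
        (0 < P (b L) β) ∧
      (0 < P α (b' 1)) ∧ (∀ i, 1 ≤ i → i < L → 0 < P (b' i) (b' (i + 1))) ∧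
        (0 < P (b' L) β) ∧
      (P α (b 1) * (∏ i ∈ Finset.Ico 1 L, P (b i) (b (i + 1))) * P (b L) β) /
          (P α (b' 1) * (∏ i ∈ Finset.Ico 1 L, P (b' i) (b' (i + 1))) * P (b' L) β)
        ≠
      (Q α (b 1) * (∏ i ∈ Finset.Ico 1 L, Q (b i) (b (i + 1))) * Q (b L) β) /
          (Q α (b' 1) * (∏ i ∈ Finset.Ico 1 L, Q (b' i) (b' (i + 1))) * Q (b' L) β) := by
  by_contra hcon
  push Not at hcon
  have hQpos : ∀ s t, 0 < P s t → 0 < Q s t := fun s t h =>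
    lt_of_le_of_ne (hQ.1 s t) fun h0 => h.ne' ((hsupp s t).2 h0.symm)
  obtain ⟨α, -⟩ := Function.ne_iff.1 hne
  have : Nonempty S := ⟨α⟩
  obtain ⟨k, hk⟩ := hPprim
  set g : S → S → ℝ := fun s t => P s t / Q s t with hg
  have hgpos : ∀ s t, 0 < P s t → 0 < g s t := fun s t h => div_pos h (hQpos s t h)
  have hwalk := exists_walk_add hP fun s t => exists_walk_of_matPow_pos hP g k s t (hk s t)
  -- The summand `2` gives every walk an interior vertex, as `ratio_unique` requires, even if `k = 0`.
  choose u hu using fun m s => hwalk (2 + m) α s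
  have hupos : ∀ m s, 0 < u m s := by
    have : ∀ {n : ℕ} {s t : S} {r : ℝ}, Walk P g n s t r → 0 < r := by
      intro n s t r w
      induction w with
      | nil s => exact one_pos
      | snoc _ he ih => exact mul_pos ih (hgpos _ _ he)
    exact fun m s => this (hu m s)
  have hstep : ∀ m s t, 0 < P s t → u (m + 1) t = u m s * g s t := fun m s t hst =>
    ratio_unique (L := k + (2 + m)) hQpos hcon (by omega) (hu (m + 1) t) ((hu m s).snoc hst)
  have hv : ∀ n, 0 ≤ n → ∀ s t, 0 < P s t →
      u (n + 1 + 1) t / u (n + 1) t = u (n + 1) s / u n s := by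
    intro n _ s t hst
    rw [hstep (n + 1) s t hst, hstep n s t hst, mul_div_mul_right _ _ (hgpos s t hst).ne']
  have hconst : ∀ t, u (k + 1) t / u k t = u 1 α / u 0 α := by
    intro t
    obtain ⟨r, w⟩ := hwalk 0 α t
    simpa using w.transport (N := 0) (v := fun n s => u (n + 1) s / u n s) hv
  refine hne (eq_of_conjugate (g := g) (h := u k) (c := u 1 α / u 0 α) hP hQ hsupp (hwalk 0)
    (hupos k) fun s t => ?_)
  rcases (hP.1 s t).eq_or_lt with h0 | hst
  · rw [← h0, (hsupp s t).1 h0.symm]; simp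
  · rw [← hconst t, div_mul_cancel₀ _ (hupos k t).ne', hstep k s t hst, hg]
    have := (hQpos s t hst).ne'
    field_simp

end CombinatorialLemma
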